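/- arXiv:1403.5605 — 3 statements merged into one kernel-verified Lean document; each statement's English description precedes it below -/
import Mathlib

section
/- The Generalized Lamport's Bakery (GLB) algorithm satisfies the Deadlock Freedom property: in every execution in which no process stays in the critical section forever, if one or more processes are forever trying to enter their critical section with no success for any of them, then there exists a process that enters the critical section infinitely often; equivalently, no such execution exists. -/
/-! ## Model of the Generalized Lamport's Bakery (GLB) algorithm -/

/-- Program counter of a process in the GLB algorithm.  The doorway is
`setChoosing s` (Choosing[i]:=true), `setSession s` (Session[i]:=s),
`scan s j m` (computing the max of the other token numbers, `j` is the next index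
to inspect and `m` the running maximum), `setToken s m` (Token[i]:=m+1) and
`unsetChoosing s` (Choosing[i]:=false).  The waiting room consists of the two
busy-wait checks `wait1 s j` and `wait2 s j`, and the exit section of
`exit1` (Token[i]:=0) and `exit2` (Session[i]:=0). -/
inductive GLBPc : Type
  | remainder
  | setChoosing (s : ℕ)
  | setSession (s : ℕ)
  | scan (s : ℕ) (j : ℕ) (m : ℕ)
  | setToken (s : ℕ) (m : ℕ)
  | unsetChoosing (s : ℕ)
  | wait1 (s : ℕ) (j : ℕ)
  | wait2 (s : ℕ) (j : ℕ)
  | cs (s : ℕ)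
  | exit1
  | exit2
  deriving DecidableEq

/-- Global state: the shared arrays together with each process's control state. -/
structure GLBState (N : ℕ) where
  session : Fin N → ℕ
  token : Fin N → ℕ
  choosing : Fin N → Bool
  pc : Fin N → GLBPc

def glbInit (N : ℕ) : GLBState N :=
  { session := fun _ => 0, token := fun _ => 0, choosing := fun _ => false,
    pc := fun _ => GLBPc.remainder }

/-- One atomic step of process `i` of the GLB algorithm, transforming state `st`
into `st'`.  A process at `remainder` may stay put or pick an arbitrary positive
session; a failed busy-wait check is a stuttering step; a process in the CS may
stay or move to the exit section. -/
def glbStep {N : ℕ} (st : GLBState N) (i : Fin N) (st' : GLBState N) : Prop :=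
  match st.pc i with
  | .remainder =>
      st' = st ∨ ∃ s : ℕ, 0 < s ∧
        st' = { st with pc := Function.update st.pc i (.setChoosing s) }
  | .setChoosing s =>
      st' = { st with choosing := Function.update st.choosing i true,
                      pc := Function.update st.pc i (.setSession s) }
  | .setSession s =>
      st' = { st with session := Function.update st.session i s,
                      pc := Function.update st.pc i (.scan s 0 0) }
  | .scan s j m =>
      if h : j < N then
        st' = { st with pc := Function.update st.pc i (.scan s (j+1)
                  (if (⟨j, h⟩ : Fin N) = i then m else max m (st.token ⟨j, h⟩))) }
      else
        st' = { st with pc := Function.update st.pc i (.setToken s m) }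
  | .setToken s m =>
      st' = { st with token := Function.update st.token i (m + 1),
                      pc := Function.update st.pc i (.unsetChoosing s) }
  | .unsetChoosing s =>
      st' = { st with choosing := Function.update st.choosing i false,
                      pc := Function.update st.pc i (.wait1 s 0) }
  | .wait1 s j =>
      if h : j < N then
        if st.choosing ⟨j, h⟩ = false ∨ st.session ⟨j, h⟩ = 0 ∨ st.session ⟨j, h⟩ = s then
          st' = { st with pc := Function.update st.pc i (.wait2 s j) }
        else st' = st
      else
        st' = { st with pc := Function.update st.pc i (.cs s) }
  | .wait2 s j =>
      if h : j < N then
        if (st.token i < st.token ⟨j, h⟩ ∨ (st.token i = st.token ⟨j, h⟩ ∧ i.val < j)) ∨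
            st.token ⟨j, h⟩ = 0 ∨ st.session ⟨j, h⟩ = 0 ∨ st.session ⟨j, h⟩ = s then
          st' = { st with pc := Function.update st.pc i (.wait1 s (j+1)) }
        else st' = st
      else st' = st
  | .cs _ =>
      st' = st ∨ st' = { st with pc := Function.update st.pc i .exit1 }
  | .exit1 =>
      st' = { st with token := Function.update st.token i 0,
                      pc := Function.update st.pc i .exit2 }
  | .exit2 =>
      st' = { st with session := Function.update st.session i 0,
                      pc := Function.update st.pc i .remainder }

/-- An execution of the GLB algorithm: an interleaving of atomic steps
(`sched n` is the process taking the `n`-th step), starting from the initial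
state, in which every process outside its remainder section eventually takes
its next step. -/
structure GLBExec (N : ℕ) where
  state : ℕ → GLBState N
  sched : ℕ → Fin N
  init : state 0 = glbInit N
  step : ∀ n, glbStep (state n) (sched n) (state (n + 1))
  fair : ∀ (i : Fin N) (n : ℕ), (state n).pc i ≠ GLBPc.remainder →
           ∃ m, n ≤ m ∧ sched m = i

/-- Process `i` is in the critical section. -/
def glbInCS {N : ℕ} (st : GLBState N) (i : Fin N) : Prop := ∃ s, st.pc i = GLBPc.cs s

/-- Process `i` is in the entry section (doorway or waiting room). -/
def glbInEntry {N : ℕ} (st : GLBState N) (i : Fin N) : Prop :=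
  match st.pc i with
  | .remainder => False
  | .cs _ => False
  | .exit1 => False
  | .exit2 => False
  | _ => True

/-- At step `n`, process `i` leaves the remainder and enters the doorway,
requesting session `s`. -/
def glbEntersDoorway {N : ℕ} (e : GLBExec N) (i : Fin N) (s : ℕ) (n : ℕ) : Prop :=
  (e.state n).pc i = GLBPc.remainder ∧ (e.state (n+1)).pc i = GLBPc.setChoosing s

/-- At step `n`, process `i` completes its doorway (executes Choosing[i]:=false). -/
def glbCompletesDoorway {N : ℕ} (e : GLBExec N) (i : Fin N) (s : ℕ) (n : ℕ) : Prop :=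
  (e.state n).pc i = GLBPc.unsetChoosing s ∧ (e.state (n+1)).pc i = GLBPc.wait1 s 0

/-- At step `n`, process `i` enters the critical section. -/
def glbEntersCS {N : ℕ} (e : GLBExec N) (i : Fin N) (n : ℕ) : Prop :=
  ¬ glbInCS (e.state n) i ∧ glbInCS (e.state (n+1)) i

/-- Process `i` does not pass through the remainder section during `(a, b]`
(so times `a` and `b` belong to the same invocation of `i`). -/
def glbActiveThrough {N : ℕ} (e : GLBExec N) (i : Fin N) (a b : ℕ) : Prop :=
  ∀ k, a < k → k ≤ b → (e.state k).pc i ≠ GLBPc.remainder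

/-! ### Remote memory references in the cache-coherent (CC) model -/

/-- The shared variables of the GLB algorithm. -/
inductive GLBVar (N : ℕ) : Type
  | session (j : Fin N)
  | token (j : Fin N)
  | choosing (j : Fin N)
  deriving DecidableEq

/-- Shared variables read by the next step of process `i` in state `st`. -/
def glbReads {N : ℕ} (st : GLBState N) (i : Fin N) : Finset (GLBVar N) :=
  match st.pc i with
  | .scan _ j _ => if h : j < N then {GLBVar.token ⟨j, h⟩} else ∅
  | .wait1 _ j => if h : j < N then {GLBVar.choosing ⟨j, h⟩, GLBVar.session ⟨j, h⟩} else ∅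
  | .wait2 _ j => if h : j < N then
      {GLBVar.token i, GLBVar.token ⟨j, h⟩, GLBVar.session ⟨j, h⟩} else ∅
  | _ => ∅

/-- Shared variables written by the next step of process `i` in state `st`. -/
def glbWrites {N : ℕ} (st : GLBState N) (i : Fin N) : Finset (GLBVar N) :=
  match st.pc i with
  | .setChoosing _ => {GLBVar.choosing i}
  | .setSession _ => {GLBVar.session i}
  | .setToken _ _ => {GLBVar.token i}
  | .unsetChoosing _ => {GLBVar.choosing i}
  | .exit1 => {GLBVar.token i}
  | .exit2 => {GLBVar.session i}
  | _ => ∅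

/-- `glbCached e n p v` holds iff just before step `n`, process `p` holds a valid
cached copy of variable `v`: a copy is acquired by reading `v` and stays valid
until some process writes `v`. -/
def glbCached {N : ℕ} (e : GLBExec N) : ℕ → Fin N → GLBVar N → Bool
  | 0, _, _ => false
  | n + 1, p, v =>
      (glbCached e n p v || (decide (e.sched n = p) && decide (v ∈ glbReads (e.state n) p)))
        && ! decide (v ∈ glbWrites (e.state n) (e.sched n))

/-- The number of remote memory references incurred by step `n` of the execution:
every write is an RMR, and a read is an RMR iff the stepping process holds no
valid cached copy. -/
def glbStepRMR {N : ℕ} (e : GLBExec N) (n : ℕ) : ℕ :=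
  (glbWrites (e.state n) (e.sched n)).card +
    ((glbReads (e.state n) (e.sched n)).filter
      (fun v => glbCached e n (e.sched n) v = false)).card

/-- The local facts about the shared variables owned by a process, given its program counter. -/
def glbLocalInv {N : ℕ} (st : GLBState N) (i : Fin N) : Prop :=
  match st.pc i with
  | .remainder => st.session i = 0 ∧ st.token i = 0 ∧ st.choosing i = false
  | .setChoosing _ => True
  | .setSession _ => True
  | .scan s _ _ => st.session i = s
  | .setToken s _ => st.session i = s
  | .unsetChoosing s => st.session i = s
  | .wait1 s _ => st.session i = s ∧ st.choosing i = false
  | .wait2 s j => st.session i = s ∧ st.choosing i = false ∧ j < N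
  | .cs _ => st.choosing i = false
  | .exit1 => st.choosing i = false
  | .exit2 => st.token i = 0 ∧ st.choosing i = false

/-- A rank that strictly decreases whenever a process changes its program counter without
entering the critical section. -/
def glbRank (N : ℕ) : GLBPc → ℕ
  | .wait1 _ j => 2 * (N - j)
  | .wait2 _ j => 2 * (N - j) - 1
  | .unsetChoosing _ => 2 * N + 1
  | .setToken _ _ => 2 * N + 2
  | .scan _ j _ => 2 * N + 3 + (N - j)
  | .setSession _ => 3 * N + 4
  | .setChoosing _ => 3 * N + 5
  | .remainder => 3 * N + 6
  | .exit2 => 3 * N + 7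
  | .exit1 => 3 * N + 8
  | .cs _ => 3 * N + 9

theorem glbStep_frame {N : ℕ} {st st' : GLBState N} {i : Fin N} (h : glbStep st i st')
    {j : Fin N} (hj : j ≠ i) :
    st'.pc j = st.pc j ∧ st'.session j = st.session j ∧ st'.token j = st.token j ∧
      st'.choosing j = st.choosing j := by
  unfold glbStep at h
  split at h <;> (try split_ifs at h) <;>
    first
    | (subst h; simp [hj])
    | (rcases h with h | ⟨s, -, h⟩ <;> subst h <;> simp [hj])
    | (rcases h with h | h <;> subst h <;> simp [hj])

theorem glbLocalInv_step {N : ℕ} {st st' : GLBState N} {i : Fin N} (h : glbStep st i st')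
    (hinv : ∀ j, glbLocalInv st j) (j : Fin N) : glbLocalInv st' j := by
  have hj := hinv j
  by_cases hji : j = i
  · subst hji
    unfold glbStep at h
    split at h <;> rename_i hpc <;> (try split_ifs at h) <;>
      simp only [glbLocalInv, hpc] at hj <;>
      first
      | (subst h; simp_all [glbLocalInv])
      | (rcases h with h | ⟨s, -, h⟩ <;> subst h <;> simp_all [glbLocalInv])
      | (rcases h with h | h <;> subst h <;> simp_all [glbLocalInv])
  · obtain ⟨h1, h2, h3, h4⟩ := glbStep_frame h hji
    simpa only [glbLocalInv, h1, h2, h3, h4] using hj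

theorem GLBExec.localInv {N : ℕ} (e : GLBExec N) (n : ℕ) :
    ∀ j, glbLocalInv (e.state n) j := by
  induction n with
  | zero => intro j; simp [e.init, glbInit, glbLocalInv]
  | succ n ih => exact glbLocalInv_step (e.step n) ih

theorem glbStep_rank_lt {N : ℕ} {st st' : GLBState N} {i : Fin N} (h : glbStep st i st')
    (hne : st' ≠ st) (hcs : ¬ (¬ glbInCS st i ∧ glbInCS st' i)) :
    glbRank N (st'.pc i) < glbRank N (st.pc i) := by
  unfold glbStep at h
  split at h <;> rename_i hpc <;> (try split_ifs at h) <;>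
    first
    | exact absurd h hne
    | (subst h; simp [glbRank, hpc] <;> omega)
    | (obtain ⟨s, -, h⟩ := h.resolve_left hne; subst h; simp [glbRank, hpc])
    | (replace h := h.resolve_left hne; subst h; simp [glbRank, hpc])
    | (subst h; simp [glbInCS, hpc] at hcs)

theorem glbStep_sum_rank_lt {N : ℕ} {st st' : GLBState N} {i : Fin N} (h : glbStep st i st')
    (hne : st' ≠ st) (hcs : ¬ (¬ glbInCS st i ∧ glbInCS st' i)) :
    ∑ j, glbRank N (st'.pc j) < ∑ j, glbRank N (st.pc j) := by
  refine Finset.sum_lt_sum (fun j _ => ?_) ⟨i, Finset.mem_univ i, glbStep_rank_lt h hne hcs⟩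
  by_cases hji : j = i
  · subst hji
    exact (glbStep_rank_lt h hne hcs).le
  · rw [(glbStep_frame h hji).1]

/-- If from some time on no process enters the critical section, the execution freezes. -/
theorem GLBExec.eventually_const {N : ℕ} (e : GLBExec N) (M : ℕ)
    (hM : ∀ k m, M ≤ m → ¬ glbEntersCS e k m) :
    ∃ T, ∀ n, T ≤ n → e.state n = e.state T := by
  have hstep : ∀ n, e.state (M + n + 1) ≠ e.state (M + n) →
      ∑ j, glbRank N ((e.state (M + n + 1)).pc j) < ∑ j, glbRank N ((e.state (M + n)).pc j) :=
    fun n hne => glbStep_sum_rank_lt (e.step _) hne (hM _ _ (Nat.le_add_right M n))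
  have hanti : Antitone fun n => ∑ j, glbRank N ((e.state (M + n)).pc j) := by
    refine antitone_nat_of_succ_le fun n => ?_
    by_cases hn : e.state (M + n + 1) = e.state (M + n)
    · rw [← add_assoc, hn]
    · exact (hstep n hn).le
  obtain ⟨T, hT⟩ := WellFoundedGT.monotone_chain_condition
    (α := ℕᵒᵈ) ⟨_, hanti.dual_right⟩
  refine ⟨M + T, fun n hn => ?_⟩
  induction n, hn using Nat.le_induction with
  | base => rfl
  | succ n hn ih =>
    obtain ⟨d, rfl⟩ := Nat.exists_eq_add_of_le (le_trans (Nat.le_add_right M T) hn)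
    rw [← ih]
    by_contra hne
    have h1 := congrArg OrderDual.ofDual (hT d (by omega))
    have h2 := congrArg OrderDual.ofDual (hT (d + 1) (by omega))
    have h3 := hstep d hne
    simp only [OrderHom.coe_mk, Function.comp_apply, OrderDual.ofDual_toDual, ← add_assoc] at h1 h2
    omega

/-- A state in which no step of a process outside its remainder has any effect, and no process
is in the critical section, has all processes in their remainder. -/
theorem pc_eq_remainder_of_stuck {N : ℕ} {st : GLBState N} (hinv : ∀ i, glbLocalInv st i)
    (hcs : ∀ i, ¬ glbInCS st i) (hstuck : ∀ i, st.pc i ≠ .remainder → glbStep st i st)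
    (i : Fin N) : st.pc i = .remainder := by
  have of_pc : ∀ {i : Fin N} {p : GLBPc}, Function.update st.pc i p = st.pc → st.pc i = p :=
    fun {i p} h => by rw [← h, Function.update_self]
  have hwait : ∀ i, st.pc i = .remainder ∨ (∃ s j, st.pc i = .wait1 s j) ∨
      ∃ s j, st.pc i = .wait2 s j := by
    intro i
    have h := hstuck i
    have hc := hcs i
    cases hpc : st.pc i <;> simp only [glbStep, hpc, glbInCS] at h hc <;> try simp
    all_goals
      first
      | (exact hc ⟨_, rfl⟩)
      | (replace h := h (by simp)
         try split_ifs at h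
         all_goals
          have h' := of_pc (congrArg GLBState.pc h).symm
          simp [hpc] at h')
  have hchoosing : ∀ i, st.choosing i = false := by
    intro i
    have h := hinv i
    rcases hwait i with hpc | ⟨s, j, hpc⟩ | ⟨s, j, hpc⟩ <;> simp only [glbLocalInv, hpc] at h
    exacts [h.2.2, h.2, h.2.1]
  have hwait2 : ∀ i, st.pc i ≠ .remainder → ∃ s j, st.pc i = .wait2 s j := by
    intro i hi
    rcases hwait i with hpc | ⟨s, j, hpc⟩ | h
    · exact absurd hpc hi
    · have h := hstuck i hi
      simp only [glbStep, hpc, hchoosing, true_or, if_true] at h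
      split_ifs at h <;>
        · have h' := of_pc (congrArg GLBState.pc h).symm
          simp [hpc] at h'
    · exact h
  by_contra hi
  obtain ⟨k, hk, hmin⟩ := Finset.exists_min_image
    (Finset.univ.filter fun k => st.pc k ≠ .remainder) (fun k => toLex (st.token k, k))
    ⟨i, by simpa using hi⟩
  simp only [Finset.mem_filter, Finset.mem_univ, true_and] at hk hmin
  obtain ⟨s, j, hpc⟩ := hwait2 k hk
  have hk_inv := hinv k
  simp only [glbLocalInv, hpc] at hk_inv
  obtain ⟨hs, -, hj⟩ := hk_inv
  have h := hstuck k hk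
  simp only [glbStep, hpc, hj, dif_pos] at h
  split_ifs at h with hguard
  · have h' := of_pc (congrArg GLBState.pc h).symm
    simp [hpc] at h'
  · push Not at hguard
    obtain ⟨⟨h1, h2⟩, h3, -, h5⟩ := hguard
    have hj_active : st.pc ⟨j, hj⟩ ≠ .remainder := by
      intro hr
      have := hinv ⟨j, hj⟩
      simp only [glbLocalInv, hr] at this
      exact h3 this.2.1
    rcases (Prod.Lex.toLex_le_toLex.mp (hmin _ hj_active)) with hlt | ⟨heq, hle⟩
    · exact absurd hlt (not_lt.mpr h1)
    · have : k = ⟨j, hj⟩ := le_antisymm hle (h2 heq)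
      exact h5 (this ▸ hs)

/-- **Deadlock freedom for the GLB algorithm** (property P6).  In every execution in which
no process stays in the critical section forever, if some process is forever trying to
enter its critical section (it remains in the entry section from some time `n` on, hence
without success), then some process enters the critical section infinitely often. -/
theorem glb_deadlock_freedom {N : ℕ} (e : GLBExec N)
    (hncs : ∀ (i : Fin N) (n : ℕ), glbInCS (e.state n) i →
      ∃ m, n ≤ m ∧ ¬ glbInCS (e.state m) i)
    (i : Fin N) (n : ℕ) (htry : ∀ m, n ≤ m → glbInEntry (e.state m) i) :
    ∃ k : Fin N, ∀ m : ℕ, ∃ m', m ≤ m' ∧ glbEntersCS e k m' := by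
  by_contra! hfin
  choose M hM using hfin
  obtain ⟨T, hT⟩ := e.eventually_const (Finset.univ.sup M) fun k m hm =>
    hM k m ((Finset.le_sup (Finset.mem_univ k)).trans hm)
  have hrem := pc_eq_remainder_of_stuck (e.localInv T)
    (fun k hk => by
      obtain ⟨m, hm, hout⟩ := hncs k T hk
      rw [hT m hm] at hout
      exact hout hk)
    (fun k hk => by
      obtain ⟨m, hm, rfl⟩ := e.fair k T hk
      have h := e.step m
      rwa [hT m hm, hT (m + 1) (by omega)] at h)
    i
  have h := htry (max n T) (le_max_left _ _)
  rw [hT _ (le_max_right _ _)] at h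
  simp [glbInEntry, hrem] at h
end

section
/- The Generalized Lamport's Bakery (GLB) algorithm has O(N) remote memory reference complexity in the CC model: there is a constant c such that in every execution, every single invocation (one pass through entry section, critical section and exit section) by any process incurs at most c·N remote memory references. -/
/-- The part of the control invariant that concerns a single process. -/
def GLBLocalInv (session token : ℕ) : GLBPc → Prop
  | .remainder => session = 0 ∧ token = 0
  | .setChoosing s => 0 < s ∧ session = 0 ∧ token = 0
  | .setSession s => 0 < s ∧ session = 0 ∧ token = 0
  | .scan s _ _ => 0 < s ∧ session = s ∧ token = 0
  | .setToken s _ => 0 < s ∧ session = s ∧ token = 0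
  | .unsetChoosing s => 0 < s ∧ session = s ∧ 0 < token
  | .wait1 s _ => 0 < s ∧ session = s ∧ 0 < token
  | .wait2 s _ => 0 < s ∧ session = s ∧ 0 < token
  | .cs _ => True
  | .exit1 => True
  | .exit2 => token = 0

/-- The shared variables of each process agree with its program counter. -/
def GLBInv {N : ℕ} (st : GLBState N) : Prop :=
  ∀ p, GLBLocalInv (st.session p) (st.token p) (st.pc p)

/-- A process with program counter `pc` and token `tok` is blocked by a conflicting process of
index `i`, session `s` and token `t` in the waiting room: it cannot reach the critical section
before that process leaves. -/
def GLBBlocked (i s t tok : ℕ) : GLBPc → Prop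
  | .scan s' k m => s' ≠ s ∧ (k ≤ i ∨ t ≤ m)
  | .setToken s' m => s' ≠ s ∧ t ≤ m
  | .unsetChoosing s' => s' ≠ s ∧ t < tok
  | .wait1 s' k => s' ≠ s ∧ t < tok ∧ k ≤ i
  | .wait2 s' k => s' ≠ s ∧ t < tok ∧ k ≤ i
  | _ => False

/-- A process with program counter `pc` is in its doorway and may still choose a token that does
not exceed the token `t` of process `i`. -/
def GLBMayUndercut (i t : ℕ) : GLBPc → Prop
  | .scan _ k m => i < k ∧ m < t
  | .setToken _ m => m < t
  | _ => False

/-- The number of variables in the next read of `i` that are not cached according to `c`. -/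
def glbUncached {N : ℕ} (st : GLBState N) (c : GLBVar N → Bool) (i : Fin N) : ℕ :=
  ((glbReads st i).filter (fun v => c v = false)).card

open Classical in
/-- Bound on the references of `i` in its first busy-wait loop on `j`. -/
noncomputable def glbPotWait1 {N : ℕ} (st : GLBState N) (c : GLBVar N → Bool) (i : Fin N)
    (s : ℕ) (j : Fin N) : ℕ :=
  (if GLBBlocked i s (st.token i) (st.token j) (st.pc j) then 2 else 4) +
    (if st.choosing j = false ∨ st.session j = 0 ∨ st.session j = s then 0
      else glbUncached st c i)

open Classical in
/-- Bound on the references of `i` in its second busy-wait loop on `j`. -/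
noncomputable def glbPotWait2 {N : ℕ} (st : GLBState N) (c : GLBVar N → Bool) (i j : Fin N) : ℕ :=
  if GLBMayUndercut i (st.token i) (st.pc j) then 6
  else if (st.token i < st.token j ∨ (st.token i = st.token j ∧ i.val < j.val)) ∨
      st.token j = 0 then 3
  else 3 + glbUncached st c i

/-- Bound on the number of remote memory references of `i` until its invocation ends. -/
noncomputable def glbPot {N : ℕ} (st : GLBState N) (c : GLBVar N → Bool) (i : Fin N) : ℕ :=
  match st.pc i with
  | .remainder => 0
  | .setChoosing _ => 6 + 13 * N
  | .setSession _ => 5 + 13 * N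
  | .scan _ j _ => 4 + 12 * N + (N - j)
  | .setToken _ _ => 4 + 12 * N
  | .unsetChoosing _ => 3 + 12 * N
  | .wait1 s j => if h : j < N then glbPotWait1 st c i s ⟨j, h⟩ + 6 + (2 + 12 * (N - (j + 1))) else 2
  | .wait2 _ j => if h : j < N then glbPotWait2 st c i ⟨j, h⟩ + (2 + 12 * (N - (j + 1))) else 2
  | .cs _ => 2
  | .exit1 => 2
  | .exit2 => 1

/-- The cache of `i` after a step of `p` in state `st`. -/
def glbNextCache {N : ℕ} (st : GLBState N) (p i : Fin N) (c : GLBVar N → Bool) :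
    GLBVar N → Bool :=
  fun v => (c v || (decide (p = i) && decide (v ∈ glbReads st i))) &&
    ! decide (v ∈ glbWrites st p)

theorem glbInv_step {N : ℕ} {st st' : GLBState N} {p : Fin N} (hinv : GLBInv st)
    (h : glbStep st p st') : GLBInv st' := by
  intro q
  have hq := hinv q
  unfold glbStep at h
  by_cases hpq : q = p
  · subst hpq
    split at h <;> rename_i hpc <;> rw [hpc] at hq <;> simp only [GLBLocalInv] at hq
    · rcases h with rfl | ⟨s, hs, rfl⟩ <;> simp [GLBLocalInv, hpc, hq]
      assumption
    all_goals first
      | (subst h; simp [GLBLocalInv, hq])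
      | (rcases h with rfl | rfl <;> simp [GLBLocalInv, hpc])
      | (repeat' split at h) <;> subst h <;> simp [GLBLocalInv, hpc, hq]
  · split at h <;> (try rcases (h : _ ∨ _) with h | h) <;> (try obtain ⟨s, hs, h⟩ : ∃ _, _ := h) <;>
      (repeat' split at h) <;> subst h <;> simpa [Function.update_of_ne hpq] using hq

/-- A step of `p` leaves the control state and variables of other processes unchanged. -/
theorem glbStep_of_ne {N : ℕ} {st st' : GLBState N} {p q : Fin N} (h : glbStep st p st')
    (hqp : q ≠ p) : st'.pc q = st.pc q ∧ st'.session q = st.session q ∧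
      st'.token q = st.token q ∧ st'.choosing q = st.choosing q := by
  unfold glbStep at h
  split at h <;> (try rcases (h : _ ∨ _) with h | h) <;> (try obtain ⟨s, hs, h⟩ : ∃ _, _ := h) <;>
    (repeat' split at h) <;> subst h <;> simp [Function.update_of_ne hqp]

theorem glbReads_congr {N : ℕ} {st st' : GLBState N} {i : Fin N} (h : st'.pc i = st.pc i) :
    glbReads st' i = glbReads st i := by
  unfold glbReads; rw [h]

theorem glbReads_card_le {N : ℕ} (st : GLBState N) (i : Fin N) : (glbReads st i).card ≤ 3 := by
  unfold glbReads
  split <;> (try split) <;> simp [Finset.card_le_three]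

theorem glbUncached_le_three {N : ℕ} (st : GLBState N) (c : GLBVar N → Bool) (i : Fin N) :
    glbUncached st c i ≤ 3 :=
  (Finset.card_filter_le _ _).trans (glbReads_card_le st i)

theorem glbUncached_le_two {N : ℕ} {st : GLBState N} {c : GLBVar N → Bool} {i : Fin N} {s j : ℕ}
    (h : st.pc i = .wait1 s j) : glbUncached st c i ≤ 2 := by
  refine (Finset.card_filter_le _ _).trans ?_
  unfold glbReads
  rw [h]
  dsimp only
  split
  · exact Finset.card_le_two
  · simp

theorem glbUncached_self {N : ℕ} {st : GLBState N} {c : GLBVar N → Bool} {i : Fin N}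
    (hw : glbWrites st i = ∅) : glbUncached st (glbNextCache st i i c) i = 0 := by
  unfold glbUncached
  rw [Finset.card_eq_zero, Finset.filter_eq_empty_iff]
  intro v hv
  simp [glbNextCache, hv, hw]

theorem glbUncached_of_disjoint {N : ℕ} {st st' : GLBState N} {c : GLBVar N → Bool}
    {p i : Fin N} (hpc : st'.pc i = st.pc i) (hpi : p ≠ i)
    (hd : ∀ v ∈ glbReads st i, v ∉ glbWrites st p) :
    glbUncached st' (glbNextCache st p i c) i = glbUncached st c i := by
  unfold glbUncached
  rw [glbReads_congr hpc]
  congr 1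
  refine Finset.filter_congr fun v hv => ?_
  simp [glbNextCache, hd v hv, hpi]

/-- A process blocked by `i` stays blocked as long as `i` remains in the waiting room. -/
theorem GLBBlocked.step {N : ℕ} {st st' : GLBState N} {i p : Fin N} {s : ℕ} (hs : 0 < s)
    (hsi : st.session i = s) (hti : 0 < st.token i) (hpi : p ≠ i) (h : glbStep st p st')
    (hb : GLBBlocked i s (st.token i) (st.token p) (st.pc p)) :
    GLBBlocked i s (st.token i) (st'.token p) (st'.pc p) := by
  unfold glbStep at h
  split at h <;> rename_i hpc <;> rw [hpc] at hb <;> simp only [GLBBlocked] at hb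
  · rename_i s' k m
    split at h
    · rename_i hk
      subst h
      by_cases hki : k = i
      · have hki' : (⟨k, hk⟩ : Fin N) = i := Fin.ext hki
        simp [GLBBlocked, hki', hpi.symm, hb]
      · simp only [GLBBlocked, Function.update_self]
        refine ⟨hb.1, ?_⟩
        rcases hb.2 with hb | hb
        · left; omega
        · right
          split
          · exact hb
          · exact hb.trans (le_max_left _ _)
    · subst h
      have := i.isLt
      simp only [GLBBlocked, Function.update_self]
      exact ⟨hb.1, by omega⟩
  · subst h
    simp only [GLBBlocked, Function.update_self]
    exact ⟨hb.1, by omega⟩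
  · subst h
    simpa [GLBBlocked] using hb
  · split at h
    · split at h <;> subst h <;> simpa [GLBBlocked, hpc] using hb
    · have := i.isLt
      omega
  · rename_i s' k
    split at h
    · rename_i hk
      split at h
      · rename_i hpass
        by_cases hki : k = i
        · have hki' : (⟨k, hk⟩ : Fin N) = i := Fin.ext hki
          rw [hki'] at hpass
          omega
        · subst h
          simp only [GLBBlocked, Function.update_self]
          exact ⟨hb.1, hb.2.1, by omega⟩
      · subst h; simpa [GLBBlocked, hpc] using hb
    · subst h; simpa [GLBBlocked, hpc] using hb

theorem glbPotWait1_le {N : ℕ} {st : GLBState N} {c : GLBVar N → Bool} {i j : Fin N} {s k : ℕ}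
    (h : st.pc i = .wait1 s k) : glbPotWait1 st c i s j ≤ 6 := by
  have := glbUncached_le_two (c := c) h
  unfold glbPotWait1
  split <;> split <;> omega

theorem glbPotWait2_le {N : ℕ} (st : GLBState N) (c : GLBVar N → Bool) (i j : Fin N) :
    glbPotWait2 st c i j ≤ 6 := by
  have := glbUncached_le_three st c i
  unfold glbPotWait2
  split_ifs <;> omega

theorem glbPotWait1_step_of_ne {N : ℕ} {st st' : GLBState N} {c : GLBVar N → Bool}
    {i p j : Fin N} {s : ℕ} (hinv : GLBInv st) (hpi : p ≠ i) (h : glbStep st p st')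
    (hi : st.pc i = .wait1 s j) :
    glbPotWait1 st' (glbNextCache st p i c) i s j ≤ glbPotWait1 st c i s j := by
  obtain ⟨hpc, hse, hto, hch⟩ := glbStep_of_ne h hpi.symm
  have hii := hinv i
  rw [hi] at hii
  obtain ⟨hs, hsi, hti⟩ := hii
  have hreads : glbReads st i = {.choosing j, .session j} := by
    unfold glbReads; rw [hi]; simp
  by_cases hjp : j = p
  · subst hjp
    have hblock := GLBBlocked.step hs hsi hti hpi h
    by_cases hd : ∀ v ∈ glbReads st i, v ∉ glbWrites st j
    · have hu := glbUncached_of_disjoint (c := c) hpc hpi hd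
      have hsame : st'.choosing j = st.choosing j ∧ st'.session j = st.session j := by
        rw [hreads] at hd
        unfold glbStep at h
        unfold glbWrites at hd
        split at h <;> rename_i hpj <;> rw [hpj] at hd <;>
          (try rcases (h : _ ∨ _) with h | h) <;> (try obtain ⟨s, hs, h⟩ : ∃ _, _ := h) <;>
          (repeat' split at h) <;> subst h <;> simp at hd ⊢
      unfold glbPotWait1
      rw [hu, hsame.1, hsame.2, hto]
      split_ifs <;> first | omega | tauto
    · have hu := glbUncached_le_two (c := glbNextCache st j i c) (hpc.trans hi)
      have hj := hinv j
      rw [hreads] at hd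
      unfold glbStep at h
      unfold glbWrites at hd
      unfold glbPotWait1
      rw [hto]
      generalize glbUncached st' (glbNextCache st j i c) i = u at *
      generalize glbUncached st c i = u' at *
      split at h <;> rename_i hpj <;> rw [hpj] at hd hj <;> simp at hd
      all_goals
        subst h
        simp [GLBLocalInv] at hj
        simp [hpj, GLBBlocked, hj] at hblock ⊢
        try (split_ifs <;> omega)
  · obtain ⟨hpc', hse', hto', hch'⟩ := glbStep_of_ne h hjp
    have hd : ∀ v ∈ glbReads st i, v ∉ glbWrites st p := by
      rw [hreads]
      unfold glbWrites
      split <;> simp [hjp]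
    unfold glbPotWait1
    rw [glbUncached_of_disjoint hpc hpi hd, hto, hpc', hse', hto', hch']

theorem GLBMayUndercut.of_step {N : ℕ} {st st' : GLBState N} {i p : Fin N}
    (hti : 0 < st.token i) (hpi : p ≠ i) (h : glbStep st p st')
    (hb : GLBMayUndercut i (st.token i) (st'.pc p)) :
    GLBMayUndercut i (st.token i) (st.pc p) := by
  unfold glbStep at h
  split at h <;> rename_i hpc <;> rw [hpc] <;>
    (try rcases (h : _ ∨ _) with h | h) <;> (try obtain ⟨s, hs, h⟩ : ∃ _, _ := h) <;>
    (repeat' split at h) <;> subst h <;> simp [hpc, GLBMayUndercut] at hb ⊢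
  · rename_i k m hk hkp
    have : k ≠ i := fun hki => hpi (hkp.symm.trans (Fin.ext hki))
    omega
  · rename_i k m hk hkp
    have : k ≠ i := fun hki => by
      have hki' : (⟨k, hk⟩ : Fin N) = i := Fin.ext hki
      rw [hki'] at hb
      omega
    omega
  · have := i.isLt
    omega

theorem glbPotWait2_step_of_ne {N : ℕ} {st st' : GLBState N} {c : GLBVar N → Bool}
    {i p j : Fin N} {s : ℕ} (hinv : GLBInv st) (hpi : p ≠ i) (h : glbStep st p st')
    (hi : st.pc i = .wait2 s j) :
    glbPotWait2 st' (glbNextCache st p i c) i j ≤ glbPotWait2 st c i j := by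
  obtain ⟨hpc, hse, hto, hch⟩ := glbStep_of_ne h hpi.symm
  have hii := hinv i
  rw [hi] at hii
  obtain ⟨hs, hsi, hti⟩ := hii
  have hreads : glbReads st i = {.token i, .token j, .session j} := by
    unfold glbReads; rw [hi]; simp
  by_cases hjp : j = p
  · subst hjp
    have hunder := GLBMayUndercut.of_step hti hpi h
    by_cases hd : ∀ v ∈ glbReads st i, v ∉ glbWrites st j
    · have hu := glbUncached_of_disjoint (c := c) hpc hpi hd
      have hu3 := glbUncached_le_three st c i
      have hsame : st'.token j = st.token j := by
        rw [hreads] at hd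
        unfold glbStep at h
        unfold glbWrites at hd
        split at h <;> rename_i hpj <;> rw [hpj] at hd <;>
          (try rcases (h : _ ∨ _) with h | h) <;> (try obtain ⟨s, hs, h⟩ : ∃ _, _ := h) <;>
          (repeat' split at h) <;> subst h <;> simp at hd ⊢
      unfold glbPotWait2
      rw [hu, hsame, hto]
      split_ifs <;> first | omega | (exfalso; tauto)
    · have hu := glbUncached_le_three st' (glbNextCache st j i c) i
      have hj := hinv j
      rw [hreads] at hd
      unfold glbStep at h
      unfold glbWrites at hd
      unfold glbPotWait2
      rw [hto]
      generalize glbUncached st' (glbNextCache st j i c) i = u at *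
      generalize glbUncached st c i = u' at *
      split at h <;> rename_i hpj <;> rw [hpj] at hd hj <;> simp [hpi.symm] at hd
      all_goals
        subst h
        simp [GLBLocalInv] at hj
        simp [hpj, GLBMayUndercut, hj]
        try (split_ifs <;> omega)
  · obtain ⟨hpc', hse', hto', hch'⟩ := glbStep_of_ne h hjp
    have hd : ∀ v ∈ glbReads st i, v ∉ glbWrites st p := by
      rw [hreads]
      unfold glbWrites
      split <;> simp [hjp, hpi.symm]
    unfold glbPotWait2
    rw [glbUncached_of_disjoint hpc hpi hd, hto, hpc', hto']

theorem glbPot_step_of_ne {N : ℕ} {st st' : GLBState N} {c : GLBVar N → Bool} {i p : Fin N}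
    (hinv : GLBInv st) (hpi : p ≠ i) (h : glbStep st p st') :
    glbPot st' (glbNextCache st p i c) i ≤ glbPot st c i := by
  have hpc := (glbStep_of_ne h hpi.symm).1
  unfold glbPot
  rw [hpc]
  split <;> rename_i hi <;> try exact le_rfl
  · split
    · rename_i hj
      have := glbPotWait1_step_of_ne (c := c) (j := ⟨_, hj⟩) hinv hpi h hi
      omega
    · exact le_rfl
  · split
    · rename_i hj
      have := glbPotWait2_step_of_ne (c := c) (j := ⟨_, hj⟩) hinv hpi h hi
      omega
    · exact le_rfl

theorem glbPot_step_self {N : ℕ} {st st' : GLBState N} {c : GLBVar N → Bool} {i : Fin N}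
    (hinv : GLBInv st) (hrem : st.pc i ≠ .remainder) (h : glbStep st i st') :
    (glbWrites st i).card + glbUncached st c i + glbPot st' (glbNextCache st i i c) i ≤
      glbPot st c i := by
  have hempty : glbReads st i = ∅ → glbUncached st c i = 0 := fun h => by simp [glbUncached, h]
  have hone : (glbReads st i).card ≤ 1 → glbUncached st c i ≤ 1 :=
    (Finset.card_filter_le _ _).trans
  unfold glbStep at h
  split at h <;> rename_i hi
  · exact absurd hi hrem
  · rw [hempty (by simp [glbReads, hi])]
    subst h
    simp [glbPot, glbWrites, hi]
    omega
  · rw [hempty (by simp [glbReads, hi])]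
    subst h
    simp [glbPot, glbWrites, hi]
    omega
  · have hw : glbWrites st i = ∅ := by simp [glbWrites, hi]
    rw [hw]
    split at h
    · rename_i hj
      have := hone (by simp [glbReads, hi, hj])
      subst h
      simp [glbPot, hi]
      omega
    · rename_i hj
      rw [hempty (by simp [glbReads, hi, hj])]
      subst h
      simp [glbPot, hi]
  · rw [hempty (by simp [glbReads, hi])]
    subst h
    simp [glbPot, glbWrites, hi]
    omega
  · rw [hempty (by simp [glbReads, hi])]
    rename_i s
    have hi' : st'.pc i = .wait1 s 0 := by rw [h]; simp
    have hN : 0 < N := i.pos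
    have := glbPotWait1_le (c := glbNextCache st i i c) (j := ⟨0, hN⟩) hi'
    simp [glbPot, glbWrites, hi, hi', hN]
    omega
  · rename_i s j
    have hw : glbWrites st i = ∅ := by simp [glbWrites, hi]
    rw [hw]
    split at h
    · rename_i hj
      have hu := glbUncached_le_two (c := c) hi
      split at h
      · have hi' : st'.pc i = .wait2 s j := by rw [h]; simp
        have := glbPotWait2_le st' (glbNextCache st i i c) i ⟨j, hj⟩
        have h2 : 2 ≤ glbPotWait1 st c i s ⟨j, hj⟩ := by
          unfold glbPotWait1; split <;> omega
        simp [glbPot, hi, hi', hj]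
        omega
      · rename_i hfail
        subst h
        simp only [glbPot, hi, hj, dite_true, glbPotWait1, hfail, if_false, glbUncached_self hw,
          Finset.card_empty]
        omega
    · rename_i hj
      rw [hempty (by simp [glbReads, hi, hj])]
      subst h
      simp [glbPot, hi, hj]
  · rename_i s j
    have hw : glbWrites st i = ∅ := by simp [glbWrites, hi]
    rw [hw]
    split at h
    · rename_i hj
      have hu := glbUncached_le_three st c i
      split at h
      · have hi' : st'.pc i = .wait1 s (j + 1) := by rw [h]; simp
        have h3 : 3 ≤ glbPotWait2 st c i ⟨j, hj⟩ := by
          unfold glbPotWait2; split_ifs <;> omega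
        simp only [glbPot, hi, hi', hj, dite_true, Finset.card_empty]
        split
        · rename_i hj'
          have := glbPotWait1_le (c := glbNextCache st i i c) (j := ⟨j + 1, hj'⟩) hi'
          omega
        · omega
      · rename_i hfail
        subst h
        have hnot : ¬ GLBMayUndercut i (st'.token i) (st'.pc ⟨j, hj⟩) := by
          have hinvj := hinv ⟨j, hj⟩
          intro hm
          cases hpj : st'.pc ⟨j, hj⟩ <;> rw [hpj] at hm hinvj <;>
            simp [GLBMayUndercut, GLBLocalInv] at hm hinvj <;> tauto
        have hfail' : ¬ ((st'.token i < st'.token ⟨j, hj⟩ ∨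
            (st'.token i = st'.token ⟨j, hj⟩ ∧ i.val < j)) ∨ st'.token ⟨j, hj⟩ = 0) := by tauto
        simp only [glbPot, hi, hj, dite_true, glbPotWait2, hnot, hfail', if_false,
          glbUncached_self hw, Finset.card_empty]
        omega
    · rename_i hj
      rw [hempty (by simp [glbReads, hi, hj])]
      subst h
      simp [glbPot, hi, hj]
  · rw [hempty (by simp [glbReads, hi])]
    rcases h with rfl | rfl <;> simp [glbPot, glbWrites, hi]
  · rw [hempty (by simp [glbReads, hi])]
    subst h
    simp [glbPot, glbWrites, hi]
  · rw [hempty (by simp [glbReads, hi])]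
    subst h
    simp [glbPot, glbWrites, hi]

theorem GLBExec.inv {N : ℕ} (e : GLBExec N) (n : ℕ) : GLBInv (e.state n) := by
  induction n with
  | zero => rw [e.init]; intro p; simp [glbInit, GLBLocalInv]
  | succ n ih => exact glbInv_step ih (e.step n)

/-- The references of `i` at an active step are paid for by the decrease of the potential. -/
theorem GLBExec.glbPot_succ {N : ℕ} (e : GLBExec N) (i : Fin N) (n : ℕ)
    (hrem : (e.state n).pc i ≠ .remainder) :
    (if e.sched n = i then glbStepRMR e n else 0) +
      glbPot (e.state (n + 1)) (glbCached e (n + 1) i) i ≤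
        glbPot (e.state n) (glbCached e n i) i := by
  have hcache : glbCached e (n + 1) i =
      glbNextCache (e.state n) (e.sched n) i (glbCached e n i) := by
    funext v; rw [glbCached, glbNextCache]
  rw [hcache]
  have hstep := e.step n
  split
  · rename_i hi
    rw [hi] at hstep ⊢
    have := glbPot_step_self (c := glbCached e n i) (e.inv n) hrem hstep
    unfold glbStepRMR
    rw [hi]
    exact this
  · rename_i hi
    have := glbPot_step_of_ne (c := glbCached e n i) (e.inv n) hi hstep
    omega

theorem GLBExec.sum_add_glbPot_le {N : ℕ} (e : GLBExec N) (i : Fin N) (a d : ℕ)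
    (hrem : ∀ k, a ≤ k → k < a + d → (e.state k).pc i ≠ .remainder) :
    (∑ k ∈ Finset.Ico a (a + d), if e.sched k = i then glbStepRMR e k else 0) +
      glbPot (e.state (a + d)) (glbCached e (a + d) i) i ≤
        glbPot (e.state a) (glbCached e a i) i := by
  induction d with
  | zero => simp
  | succ d ih =>
    have h1 := ih fun k hk hk' => hrem k hk (by omega)
    have h2 := e.glbPot_succ i (a + d) (hrem _ (by omega) (by omega))
    rw [← add_assoc, Finset.sum_Ico_succ_top (by omega)]
    omega

/-- **O(N) RMR complexity of the GLB algorithm in the CC model.**  There is a constant `c`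
such that in every execution with any number `N` of processes, every single invocation by
a process `i` — entered at step `a` (leaving the remainder section) and completed at step
`b` (returning to the remainder section), staying outside the remainder section in
between — incurs at most `c * N` remote memory references. -/
theorem glb_rmr_linear :
    ∃ c : ℕ, ∀ (N : ℕ) (e : GLBExec N) (i : Fin N) (a b : ℕ),
      (e.state a).pc i = GLBPc.remainder →
      (e.state (a + 1)).pc i ≠ GLBPc.remainder →
      (e.state b).pc i = GLBPc.exit2 →
      (e.state (b + 1)).pc i = GLBPc.remainder →
      a < b →
      glbActiveThrough e i a b →
      (∑ k ∈ Finset.Icc a b, if e.sched k = i then glbStepRMR e k else 0) ≤ c * N := by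
  refine ⟨19, fun N e i a b ha ha' _ _ hab hact => ?_⟩
  have hzero : (if e.sched a = i then glbStepRMR e a else 0) = 0 := by
    split
    · rename_i hi
      simp [glbStepRMR, hi, glbReads, glbWrites, ha]
    · rfl
  have hstart : glbPot (e.state (a + 1)) (glbCached e (a + 1) i) i = 6 + 13 * N := by
    have hstep := e.step a
    have hi : e.sched a = i := by
      by_contra hne
      exact ha' ((glbStep_of_ne hstep (Ne.symm hne)).1.trans ha)
    rw [hi] at hstep
    simp only [glbStep, ha] at hstep
    rcases hstep with h | ⟨s, _, h⟩
    · exact absurd (h ▸ ha) ha'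
    · simp [glbPot, h]
  have hsum := e.sum_add_glbPot_le i (a + 1) (b - a) fun k hk hk' => hact k hk (by omega)
  have hIcc : Finset.Icc a b = Finset.Ico a (a + 1 + (b - a)) := by
    ext k; simp only [Finset.mem_Icc, Finset.mem_Ico]; omega
  rw [hIcc, Finset.sum_eq_sum_Ico_succ_bot (by omega), hzero]
  have := i.pos
  omega
end

section
/- In every execution of the BWBGME algorithm, if process P_i doorway-precedes process P_j and the two processes request different sessions, then P_j does not enter the critical section before P_i enters the critical section (the FCFS property holds). -/
/-! ## Model of the Black and White Bakery GME (BWBGME) algorithm -/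

inductive Color : Type
  | black
  | white
  deriving DecidableEq

/-- The opposite color. -/
def Color.opp : Color → Color
  | .black => .white
  | .white => .black

/-- A token: a session number, a color in {black, white, ⊥} (`none` is ⊥) and a
token number. -/
structure BWTok where
  session : ℕ
  color : Option Color
  number : ℕ
  deriving DecidableEq

def BWTok.init : BWTok := ⟨0, none, 0⟩

/-- Program counter of a process in the BWBGME algorithm.  The doorway is
`d1 s` (Token[i]:=(s,⊥,0)), `d2 s` (Choosing[i]:=true, line 4),
`d3 s` (mycolor:=GlobalColor, line 5), `scan s c j m` (the loop computing the max `m`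
of the token numbers of conflicting processes with token color `c`; `j` is the next
index to read), `d4 s c m` (Token[i]:=(s,c,m), where `m` is the final mynumber) and
`d5 s c m` (Choosing[i]:=false).  The waiting room iterates, for each `j`:
`w1` (wait until Choosing[j]=false or Token[j].session=s), `wB` (the branch reading
Token[j].color), and the busy-waits `wSame` / `wDiff`.  The exit section is the scan
`x1 s c m j` looking for an active process of the opposite color (entered only when
`m ≠ 1`), `xFlip s c m` (GlobalColor := opposite of `c`) and `x2` (Token[i]:=(0,⊥,0)). -/
inductive BWPc : Type
  | remainder
  | d1 (s : ℕ)
  | d2 (s : ℕ)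
  | d3 (s : ℕ)
  | scan (s : ℕ) (c : Color) (j : ℕ) (m : ℕ)
  | d4 (s : ℕ) (c : Color) (m : ℕ)
  | d5 (s : ℕ) (c : Color) (m : ℕ)
  | w1 (s : ℕ) (c : Color) (m : ℕ) (j : ℕ)
  | wB (s : ℕ) (c : Color) (m : ℕ) (j : ℕ)
  | wSame (s : ℕ) (c : Color) (m : ℕ) (j : ℕ)
  | wDiff (s : ℕ) (c : Color) (m : ℕ) (j : ℕ)
  | cs (s : ℕ) (c : Color) (m : ℕ)
  | x1 (s : ℕ) (c : Color) (m : ℕ) (j : ℕ)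
  | xFlip (s : ℕ) (c : Color) (m : ℕ)
  | x2
  deriving DecidableEq

/-- Global state: GlobalColor, the shared arrays Token and Choosing, and the
control state of each process. -/
structure BWState (N : ℕ) where
  gcolor : Color
  token : Fin N → BWTok
  choosing : Fin N → Bool
  pc : Fin N → BWPc

/-- Initial state; GlobalColor is initialized arbitrarily to `c0`. -/
def bwInit (N : ℕ) (c0 : Color) : BWState N :=
  { gcolor := c0, token := fun _ => BWTok.init, choosing := fun _ => false,
    pc := fun _ => BWPc.remainder }

/-- One atomic step of process `i` of the BWBGME algorithm. -/
def bwStep {N : ℕ} (st : BWState N) (i : Fin N) (st' : BWState N) : Prop :=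
  match st.pc i with
  | .remainder =>
      st' = st ∨ ∃ s : ℕ, 0 < s ∧ st' = { st with pc := Function.update st.pc i (.d1 s) }
  | .d1 s =>
      st' = { st with token := Function.update st.token i ⟨s, none, 0⟩,
                      pc := Function.update st.pc i (.d2 s) }
  | .d2 s =>
      st' = { st with choosing := Function.update st.choosing i true,
                      pc := Function.update st.pc i (.d3 s) }
  | .d3 s =>
      st' = { st with pc := Function.update st.pc i (.scan s st.gcolor 0 0) }
  | .scan s c j m =>
      if h : j < N then
        st' = { st with pc := Function.update st.pc i (.scan s c (j+1)
                  (if (st.token ⟨j, h⟩).color = some c ∧ (st.token ⟨j, h⟩).session ≠ 0 ∧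
                      (st.token ⟨j, h⟩).session ≠ s
                   then max m (st.token ⟨j, h⟩).number else m)) }
      else
        st' = { st with pc := Function.update st.pc i (.d4 s c (m+1)) }
  | .d4 s c m =>
      st' = { st with token := Function.update st.token i ⟨s, some c, m⟩,
                      pc := Function.update st.pc i (.d5 s c m) }
  | .d5 s c m =>
      st' = { st with choosing := Function.update st.choosing i false,
                      pc := Function.update st.pc i (.w1 s c m 0) }
  | .w1 s c m j =>
      if h : j < N then
        if st.choosing ⟨j, h⟩ = false ∨ (st.token ⟨j, h⟩).session = s then
          st' = { st with pc := Function.update st.pc i (.wB s c m j) }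
        else st' = st
      else
        st' = { st with pc := Function.update st.pc i (.cs s c m) }
  | .wB s c m j =>
      if h : j < N then
        if (st.token ⟨j, h⟩).color = some c then
          st' = { st with pc := Function.update st.pc i (.wSame s c m j) }
        else
          st' = { st with pc := Function.update st.pc i (.wDiff s c m j) }
      else st' = st
  | .wSame s c m j =>
      if h : j < N then
        if (m < (st.token ⟨j, h⟩).number ∨ (m = (st.token ⟨j, h⟩).number ∧ i.val < j)) ∨
            (st.token ⟨j, h⟩).color ≠ some c ∨ (st.token ⟨j, h⟩).session = 0 ∨
            (st.token ⟨j, h⟩).session = s then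
          st' = { st with pc := Function.update st.pc i (.w1 s c m (j+1)) }
        else st' = st
      else st' = st
  | .wDiff s c m j =>
      if h : j < N then
        if st.gcolor ≠ c ∨ (st.token ⟨j, h⟩).color = some c ∨
            (st.token ⟨j, h⟩).session = 0 ∨ (st.token ⟨j, h⟩).session = s then
          st' = { st with pc := Function.update st.pc i (.w1 s c m (j+1)) }
        else st' = st
      else st' = st
  | .cs s c m =>
      st' = st ∨
        st' = { st with pc :=
                  Function.update st.pc i (if m = 1 then BWPc.x2 else BWPc.x1 s c m 0) }
  | .x1 s c m j =>
      if h : j < N then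
        if (st.token ⟨j, h⟩).session ≠ 0 ∧ (st.token ⟨j, h⟩).color = some c.opp then
          st' = { st with pc := Function.update st.pc i .x2 }
        else
          st' = { st with pc := Function.update st.pc i (.x1 s c m (j+1)) }
      else
        st' = { st with pc := Function.update st.pc i (.xFlip s c m) }
  | .xFlip _ c _ =>
      st' = { st with gcolor := c.opp, pc := Function.update st.pc i .x2 }
  | .x2 =>
      st' = { st with token := Function.update st.token i BWTok.init,
                      pc := Function.update st.pc i .remainder }

/-- An execution of the BWBGME algorithm: an interleaving of atomic steps from an
initial state (with arbitrary GlobalColor) in which every process outside its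
remainder section eventually takes its next step. -/
structure BWExec (N : ℕ) where
  state : ℕ → BWState N
  sched : ℕ → Fin N
  init : ∃ c0, state 0 = bwInit N c0
  step : ∀ n, bwStep (state n) (sched n) (state (n + 1))
  fair : ∀ (i : Fin N) (n : ℕ), (state n).pc i ≠ BWPc.remainder →
           ∃ m, n ≤ m ∧ sched m = i

/-- Process `i` is in the critical section. -/
def bwInCS {N : ℕ} (st : BWState N) (i : Fin N) : Prop :=
  ∃ s c m, st.pc i = BWPc.cs s c m

/-- Process `i` is in the entry section (doorway or waiting room). -/
def bwInEntry {N : ℕ} (st : BWState N) (i : Fin N) : Prop :=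
  match st.pc i with
  | .remainder => False
  | .cs _ _ _ => False
  | .x1 _ _ _ _ => False
  | .xFlip _ _ _ => False
  | .x2 => False
  | _ => True

/-- At step `n`, process `i` leaves the remainder and enters the doorway,
requesting session `s`. -/
def bwEntersDoorway {N : ℕ} (e : BWExec N) (i : Fin N) (s : ℕ) (n : ℕ) : Prop :=
  (e.state n).pc i = BWPc.remainder ∧ (e.state (n+1)).pc i = BWPc.d1 s

/-- At step `n`, process `i` completes its doorway (executes Choosing[i]:=false),
having requested session `s` and chosen token color `c` and token number `m`. -/
def bwCompletesDoorway {N : ℕ} (e : BWExec N) (i : Fin N) (s : ℕ) (c : Color) (m : ℕ)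
    (n : ℕ) : Prop :=
  (e.state n).pc i = BWPc.d5 s c m ∧ (e.state (n+1)).pc i = BWPc.w1 s c m 0

/-- At step `n`, process `i` executes line 5, reading GlobalColor = `c`
(its invocation requests session `s`). -/
def bwLine5 {N : ℕ} (e : BWExec N) (i : Fin N) (s : ℕ) (c : Color) (n : ℕ) : Prop :=
  (e.state n).pc i = BWPc.d3 s ∧ (e.state (n+1)).pc i = BWPc.scan s c 0 0

/-- At step `n`, process `i` executes line 4 (Choosing[i]:=true). -/
def bwLine4 {N : ℕ} (e : BWExec N) (i : Fin N) (s : ℕ) (n : ℕ) : Prop :=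
  (e.state n).pc i = BWPc.d2 s ∧ (e.state (n+1)).pc i = BWPc.d3 s

/-- At step `n`, process `i` enters the critical section. -/
def bwEntersCS {N : ℕ} (e : BWExec N) (i : Fin N) (n : ℕ) : Prop :=
  ¬ bwInCS (e.state n) i ∧ bwInCS (e.state (n+1)) i

/-- At step `n`, process `i` finishes (leaves) the critical section. -/
def bwLeavesCS {N : ℕ} (e : BWExec N) (i : Fin N) (n : ℕ) : Prop :=
  bwInCS (e.state n) i ∧ ¬ bwInCS (e.state (n+1)) i

/-- At step `n`, process `i` completes its exit section
(executes Token[i]:=(0,⊥,0) and returns to the remainder section). -/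
def bwCompletesExit {N : ℕ} (e : BWExec N) (i : Fin N) (n : ℕ) : Prop :=
  (e.state n).pc i = BWPc.x2 ∧ (e.state (n+1)).pc i = BWPc.remainder

/-- Process `i` does not pass through the remainder section during `(a, b]`
(so times `a` and `b` belong to the same invocation of `i`). -/
def bwActiveThrough {N : ℕ} (e : BWExec N) (i : Fin N) (a b : ℕ) : Prop :=
  ∀ k, a < k → k ≤ b → (e.state k).pc i ≠ BWPc.remainder

/-- GlobalColor is flipped at step `n`: the step is a write that changes its value. -/
def bwFlipAt {N : ℕ} (e : BWExec N) (n : ℕ) : Prop :=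
  (e.state (n+1)).gcolor ≠ (e.state n).gcolor

/-! ## Invariants of the algorithm -/

/-- Session and color of a process that has read GlobalColor but not yet published its color. -/
def BWPc.unpublished : BWPc → Option (ℕ × Color)
  | .scan s c _ _ => some (s, c)
  | .d4 s c _ => some (s, c)
  | _ => none

/-- Session, color, and token number of a process between line 5 and the end of its exit scan;
during the doorway scan the number is the one it would choose if the scan stopped now. -/
def BWPc.ticket : BWPc → Option (ℕ × Color × ℕ)
  | .scan s c _ m => some (s, c, m + 1)
  | .d4 s c m => some (s, c, m)
  | .d5 s c m => some (s, c, m)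
  | .w1 s c m _ => some (s, c, m)
  | .wB s c m _ => some (s, c, m)
  | .wSame s c m _ => some (s, c, m)
  | .wDiff s c m _ => some (s, c, m)
  | .cs s c m => some (s, c, m)
  | .x1 s c m _ => some (s, c, m)
  | .xFlip s c m => some (s, c, m)
  | _ => none

/-- The process has passed the test on `Choosing[n]` in its waiting room. -/
def BWPc.PastChoosing (n : ℕ) : BWPc → Prop
  | .w1 _ _ _ j => n < j
  | .wB _ _ _ j => n ≤ j
  | .wSame _ _ _ j => n ≤ j
  | .wDiff _ _ _ j => n ≤ j
  | .cs _ _ _ => True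
  | .x1 _ _ _ _ => True
  | .xFlip _ _ _ => True
  | .x2 => True
  | _ => False

/-- The process has passed index `n` in its waiting room, or is about to do so although
`Token[n]` did not have its color. -/
def BWPc.PastTurn (n : ℕ) : BWPc → Prop
  | .w1 _ _ _ j => n < j
  | .wB _ _ _ j => n < j
  | .wSame _ _ _ j => n < j
  | .wDiff _ _ _ j => n ≤ j
  | .cs _ _ _ => True
  | .x1 _ _ _ _ => True
  | .xFlip _ _ _ => True
  | .x2 => True
  | _ => False

/-- The process has color `c`, and its exit scan has examined index `n` without finding a process
of the opposite color. -/
def BWPc.ExitChecked (c : Color) (n : ℕ) : BWPc → Prop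
  | .x1 _ c' _ j => c' = c ∧ n < j
  | .xFlip _ c' _ => c' = c
  | _ => False

/-- Consistency of the control state of a process with its shared variables. -/
def BWPc.Consistent (t : BWTok) (ch : Bool) : BWPc → Prop
  | .remainder => t = BWTok.init
  | .d1 s => t = BWTok.init ∧ 0 < s
  | .d2 s => t = ⟨s, none, 0⟩ ∧ 0 < s
  | .d3 s => t = ⟨s, none, 0⟩ ∧ 0 < s ∧ ch = true
  | .scan s _ _ _ => t = ⟨s, none, 0⟩ ∧ 0 < s ∧ ch = true
  | .d4 s _ m => t = ⟨s, none, 0⟩ ∧ 0 < s ∧ ch = true ∧ 1 ≤ m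
  | .d5 s c m => t = ⟨s, some c, m⟩ ∧ 0 < s ∧ 1 ≤ m
  | .w1 s c m _ => t = ⟨s, some c, m⟩ ∧ 0 < s ∧ 1 ≤ m
  | .wB s c m _ => t = ⟨s, some c, m⟩ ∧ 0 < s ∧ 1 ≤ m
  | .wSame s c m _ => t = ⟨s, some c, m⟩ ∧ 0 < s ∧ 1 ≤ m
  | .wDiff s c m _ => t = ⟨s, some c, m⟩ ∧ 0 < s ∧ 1 ≤ m
  | .cs s c m => t = ⟨s, some c, m⟩ ∧ 0 < s ∧ 1 ≤ m
  | .x1 s c m _ => t = ⟨s, some c, m⟩ ∧ 0 < s ∧ 2 ≤ m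
  | .xFlip s c m => t = ⟨s, some c, m⟩ ∧ 0 < s ∧ 2 ≤ m
  | .x2 => 0 < t.session

theorem Color.opp_ne (c : Color) : c.opp ≠ c := by cases c <;> simp [Color.opp]

theorem Color.opp_opp (c : Color) : c.opp.opp = c := by cases c <;> rfl

theorem Color.eq_opp_of_ne {c c' : Color} (h : c ≠ c') : c = c'.opp := by
  cases c <;> cases c' <;> simp_all [Color.opp]

/-- The inductive invariant.  Its heart is `exitChecked`: a process about to flip GlobalColor
coexists with no process, published or not, of the new color. -/
structure BWInv {N : ℕ} (st : BWState N) : Prop where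
  consistent : ∀ i, (st.pc i).Consistent (st.token i) (st.choosing i)
  blocked : ∀ i q s, (st.pc i).unpublished = some (s, st.gcolor.opp) →
    (st.token q).color = some st.gcolor → (st.token q).session ≠ s →
    ¬ (st.pc q).PastChoosing i
  witness : ∀ i k s b, (st.pc i).unpublished = some (s, st.gcolor.opp) →
    (st.pc k).ticket = some (s, st.gcolor, b) → 2 ≤ b →
    ∃ q, (st.token q).color = some st.gcolor ∧ (st.token q).session ≠ 0 ∧
      (st.token q).session ≠ s ∧ (st.token q).number < b ∧ ¬ (st.pc k).PastTurn q
  exitChecked : ∀ i k : Fin N, (st.pc k).ExitChecked st.gcolor i →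
    (∀ s, (st.pc i).unpublished ≠ some (s, st.gcolor.opp)) ∧
      (st.token i).color ≠ some st.gcolor.opp

theorem BWPc.Consistent.of_unpublished {t : BWTok} {ch : Bool} {pc : BWPc} {s : ℕ} {c : Color}
    (h : pc.Consistent t ch) (hpc : pc.unpublished = some (s, c)) :
    t = ⟨s, none, 0⟩ ∧ ch = true := by
  cases pc <;> simp_all [BWPc.Consistent, BWPc.unpublished]

theorem BWPc.Consistent.session_ne_zero {t : BWTok} {ch : Bool} {pc : BWPc}
    (h : pc.Consistent t ch) (ht : t.color ≠ none) : t.session ≠ 0 := by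
  cases pc <;> grind [BWPc.Consistent, BWTok.init]

theorem BWPc.Consistent.color_of_ticket {t : BWTok} {ch : Bool} {pc : BWPc} {s : ℕ} {c : Color}
    {b : ℕ} (h : pc.Consistent t ch) (hpc : pc.ticket = some (s, c, b)) :
    pc.unpublished = some (s, c) ∨ t.color = some c := by
  cases pc <;> simp_all [BWPc.Consistent, BWPc.unpublished, BWPc.ticket]

theorem BWPc.Consistent.color_of_exitChecked {t : BWTok} {ch : Bool} {pc : BWPc} {c : Color}
    {n : ℕ} (h : pc.Consistent t ch) (hpc : pc.ExitChecked c n) : t.color = some c := by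
  cases pc <;> simp_all [BWPc.Consistent, BWPc.ExitChecked]

theorem BWInv.init (N : ℕ) (c : Color) : BWInv (bwInit N c) := by
  constructor <;> simp [bwInit, BWPc.Consistent, BWPc.unpublished, BWPc.ExitChecked]

theorem BWInv.unpublished_ne {N : ℕ} {st : BWState N} (h : BWInv st) {k : Fin N} {s m j : ℕ}
    (hk : st.pc k = .x1 s st.gcolor m j) (i : Fin N) (t : ℕ) :
    (st.pc i).unpublished ≠ some (t, st.gcolor.opp) := by
  intro hi
  have hc := h.consistent k
  rw [hk] at hc
  obtain ⟨ht, -, hm⟩ := hc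
  by_cases hst : s = t
  · subst hst
    obtain ⟨q, -, -, -, -, hq⟩ := h.witness i k s m hi (by rw [hk]; rfl) hm
    exact hq (by rw [hk]; trivial)
  · exact h.blocked i k t hi (by rw [ht]) (by rw [ht]; exact hst) (by rw [hk]; trivial)

theorem bwStep_consistent {N : ℕ} {st st' : BWState N} {p : Fin N} (h : BWInv st)
    (hstep : bwStep st p st') (i : Fin N) :
    (st'.pc i).Consistent (st'.token i) (st'.choosing i) := by
  have hp := h.consistent p
  have hi := h.consistent i
  unfold bwStep at hstep
  split at hstep <;> (try split_ifs at hstep) <;>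
    first | subst hstep | rcases hstep with rfl | ⟨_, _, rfl⟩
  all_goals try simp only [Function.update_apply] at *
  all_goals grind [BWPc.Consistent]

theorem bwStep_blocked {N : ℕ} {st st' : BWState N} {p : Fin N} (h : BWInv st)
    (hstep : bwStep st p st') (hg : st'.gcolor = st.gcolor) (i q : Fin N) (s : ℕ)
    (hi : (st'.pc i).unpublished = some (s, st'.gcolor.opp))
    (hq : (st'.token q).color = some st'.gcolor) (hs : (st'.token q).session ≠ s) :
    ¬ (st'.pc q).PastChoosing i := by
  have hb := h.blocked i q s
  have hci := h.consistent i
  have hcq := h.consistent q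
  have hui := hci.of_unpublished (s := s) (c := st.gcolor.opp)
  have hopp := Color.opp_ne st.gcolor
  unfold bwStep at hstep
  split at hstep <;> (try split_ifs at hstep) <;>
    first | subst hstep | rcases hstep with rfl | ⟨_, _, rfl⟩
  all_goals try simp only [Function.update_apply] at *
  all_goals
    grind [BWPc.Consistent, BWPc.PastChoosing, BWPc.unpublished, BWTok.init]

theorem bwStep_witness {N : ℕ} {st st' : BWState N} {p : Fin N} (h : BWInv st)
    (hstep : bwStep st p st') (hg : st'.gcolor = st.gcolor) (i k : Fin N) (s b : ℕ)
    (hi : (st'.pc i).unpublished = some (s, st'.gcolor.opp))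
    (hk : (st'.pc k).ticket = some (s, st'.gcolor, b)) (hb : 2 ≤ b) :
    ∃ q, (st'.token q).color = some st'.gcolor ∧ (st'.token q).session ≠ 0 ∧
      (st'.token q).session ≠ s ∧ (st'.token q).number < b ∧ ¬ (st'.pc k).PastTurn q := by
  have hw := h.witness i k s
  have hbl := fun q => h.blocked i q s
  have hci := h.consistent i
  have hck := h.consistent k
  have hcp := h.consistent p
  have hui := hci.of_unpublished (s := s) (c := st.gcolor.opp)
  have hopp := Color.opp_ne st.gcolor
  unfold bwStep at hstep
  split at hstep <;> (try split_ifs at hstep) <;>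
    first | subst hstep | rcases hstep with rfl | ⟨_, _, rfl⟩
  all_goals try simp only [Function.update_apply] at *
  all_goals
    grind [BWPc.Consistent, BWPc.PastChoosing, BWPc.PastTurn, BWPc.ticket, BWPc.unpublished,
      BWTok.init]

theorem bwStep_exitChecked {N : ℕ} {st st' : BWState N} {p : Fin N} (h : BWInv st)
    (hstep : bwStep st p st') (hg : st'.gcolor = st.gcolor) (i k : Fin N)
    (hk : (st'.pc k).ExitChecked st'.gcolor i) :
    (∀ s, (st'.pc i).unpublished ≠ some (s, st'.gcolor.opp)) ∧
      (st'.token i).color ≠ some st'.gcolor.opp := by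
  have hb := h.exitChecked i k
  have hci := h.consistent i
  have hck := h.consistent k
  have hopp := Color.opp_ne st.gcolor
  have hsi := hci.session_ne_zero
  have hd4 := fun s c m (hx : st.pc i = .d4 s c m) => congrArg BWPc.unpublished hx
  have hu := fun s m j (hx : st.pc k = .x1 s st.gcolor m j) => h.unpublished_ne hx i
  unfold bwStep at hstep
  split at hstep <;> (try split_ifs at hstep) <;>
    first | subst hstep | rcases hstep with rfl | ⟨_, _, rfl⟩
  all_goals try simp only [Function.update_apply] at *
  all_goals
    grind [BWPc.Consistent, BWPc.ExitChecked, BWPc.unpublished, BWTok.init]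

theorem bwStep_gcolor {N : ℕ} {st st' : BWState N} {p : Fin N}
    (hstep : bwStep st p st') (hg : st'.gcolor ≠ st.gcolor) :
    st'.gcolor = st.gcolor.opp ∧ ∀ i, (st.pc p).ExitChecked st.gcolor i := by
  unfold bwStep at hstep
  split at hstep <;> (try split_ifs at hstep) <;>
    first | subst hstep | rcases hstep with rfl | ⟨_, _, rfl⟩
  all_goals try exact absurd rfl hg
  next s c m hp =>
    have hc : c = st.gcolor := by
      simpa only [Color.opp_opp] using (Color.eq_opp_of_ne hg.symm).symm
    subst hc
    exact ⟨rfl, fun i => by rw [hp]; rfl⟩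

theorem bwStep_flip {N : ℕ} {st st' : BWState N} {p : Fin N} (h : BWInv st)
    (hstep : bwStep st p st') (hg : st'.gcolor ≠ st.gcolor) (i : Fin N) :
    (∀ s, (st'.pc i).unpublished ≠ some (s, st'.gcolor)) ∧
      (st'.token i).color ≠ some st'.gcolor := by
  obtain ⟨hg', hc⟩ := bwStep_gcolor hstep hg
  have hi := h.exitChecked i p (hc i)
  unfold bwStep at hstep
  split at hstep <;> (try split_ifs at hstep) <;>
    first | subst hstep | rcases hstep with rfl | ⟨_, _, rfl⟩
  all_goals try exact absurd rfl hg
  all_goals try simp only [Function.update_apply] at *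
  all_goals grind [BWPc.unpublished]

theorem BWInv.step {N : ℕ} {st st' : BWState N} {p : Fin N} (h : BWInv st)
    (hstep : bwStep st p st') : BWInv st' := by
  have hcons := bwStep_consistent h hstep
  by_cases hg : st'.gcolor = st.gcolor
  · exact ⟨hcons, bwStep_blocked h hstep hg, bwStep_witness h hstep hg,
      bwStep_exitChecked h hstep hg⟩
  have hflip := bwStep_flip h hstep hg
  refine ⟨hcons, fun i q s _ hq => absurd hq (hflip q).2, fun i k s b _ hk => ?_,
    fun i k hk => ?_⟩
  · exact ((hcons k).color_of_ticket hk).elim (fun hu => absurd hu ((hflip k).1 s))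
      fun ht => absurd ht (hflip k).2
  · exact absurd ((hcons k).color_of_exitChecked hk) (hflip k).2

theorem BWInv.exec {N : ℕ} (e : BWExec N) (n : ℕ) : BWInv (e.state n) := by
  induction n with
  | zero =>
    obtain ⟨c, hc⟩ := e.init
    exact hc ▸ BWInv.init N c
  | succ n ih => exact ih.step (e.step n)

/-! ## First come, first served -/

/-- A process in its waiting room. -/
def BWPc.Waiting (s : ℕ) (c : Color) (m : ℕ) (pc : BWPc) : Prop :=
  ∃ j, pc = .w1 s c m j ∨ pc = .wB s c m j ∨ pc = .wSame s c m j ∨ pc = .wDiff s c m j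

theorem BWPc.Consistent.token_eq {t : BWTok} {ch : Bool} {pc : BWPc} {s : ℕ} {c : Color} {m : ℕ}
    (h : pc.Consistent t ch) (hw : pc.Waiting s c m) : t = ⟨s, some c, m⟩ ∧ 0 < s := by
  obtain ⟨j, rfl | rfl | rfl | rfl⟩ := hw <;> exact ⟨h.1, h.2.1⟩

theorem BWPc.Waiting.step {N : ℕ} {st st' : BWState N} {p i : Fin N} {s : ℕ} {c : Color} {m : ℕ}
    (hstep : bwStep st p st') (hw : (st.pc i).Waiting s c m) :
    (st'.pc i).Waiting s c m ∨ ¬ bwInCS st i ∧ bwInCS st' i := by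
  unfold bwStep at hstep
  unfold bwInCS
  split at hstep <;> (try split_ifs at hstep) <;>
    first | subst hstep | rcases hstep with rfl | ⟨_, _, rfl⟩
  all_goals try simp only [Function.update_apply] at *
  all_goals grind [BWPc.Waiting]

/-- A process with session `s` that has not got past a process of index `n`, waiting with color
`c` and number `m` since before its doorway; `g` is the current GlobalColor. -/
def BWPc.Behind (n : ℕ) (c : Color) (m : ℕ) (g : Color) (s : ℕ) : BWPc → Prop
  | .d1 s' => s' = s
  | .d2 s' => s' = s
  | .d3 s' => s' = s
  | .scan s' c' k m' => s' = s ∧ (c' = c → n < k → m ≤ m') ∧ (c' ≠ c → g = c')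
  | .d4 s' c' m' => s' = s ∧ (c' = c → m < m') ∧ (c' ≠ c → g = c')
  | .d5 s' c' m' => s' = s ∧ (c' = c → m < m') ∧ (c' ≠ c → g = c')
  | .w1 s' c' m' k => s' = s ∧ (c' = c → m < m') ∧ (c' ≠ c → g = c') ∧ k ≤ n
  | .wB s' c' m' k => s' = s ∧ (c' = c → m < m') ∧ (c' ≠ c → g = c') ∧ k ≤ n
  | .wSame s' c' m' k => s' = s ∧ (c' = c → m < m') ∧ (c' ≠ c → g = c' ∧ k ≠ n) ∧ k ≤ n
  | .wDiff s' c' m' k => s' = s ∧ (c' = c → m < m' ∧ k ≠ n) ∧ (c' ≠ c → g = c') ∧ k ≤ n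
  | _ => False

theorem BWPc.Behind.congr_gcolor {n m s : ℕ} {c g g' : Color} {pc : BWPc}
    (h : pc.Behind n c m g s) (hg : g ≠ c → g' = g) : pc.Behind n c m g' s := by
  cases pc <;> grind [BWPc.Behind]

theorem BWPc.Behind.step {N : ℕ} {st st' : BWState N} {p i j : Fin N} {s s' m : ℕ} {c : Color}
    (h : BWInv st) (hstep : bwStep st p st') (hs : s ≠ s') (hw : (st.pc i).Waiting s c m)
    (hj : (st.pc j).Behind i c m st.gcolor s') : (st'.pc j).Behind i c m st'.gcolor s' := by
  obtain ⟨ht, hpos⟩ := (h.consistent i).token_eq hw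
  have hg : st.gcolor ≠ c → st'.gcolor = st.gcolor := by
    intro hc
    by_contra hg
    refine (h.exitChecked i p ((bwStep_gcolor hstep hg).2 i)).2 ?_
    rw [ht, ← Color.eq_opp_of_ne hc.symm]
  refine BWPc.Behind.congr_gcolor ?_ hg
  clear hg
  have hi := i.isLt
  unfold bwStep at hstep
  split at hstep <;> (try split_ifs at hstep) <;>
    first | subst hstep | rcases hstep with rfl | ⟨_, _, rfl⟩
  all_goals try simp only [Function.update_apply] at *
  all_goals grind [BWPc.Behind]

/-- **FCFS for the BWBGME algorithm.**  If process `i` completes its doorway (at step `d`,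
requesting session `si`) before process `j` enters its doorway (at step `a`, requesting a
different session `sj`), then `j` does not enter the critical section before `i` does:
whenever `j` enters the CS at step `c2` of that invocation, `i` has already entered the
CS, at some step `c1 ≤ c2` of the invocation whose doorway was completed at `d`. -/
theorem bw_fcfs {N : ℕ} (e : BWExec N) (i j : Fin N) (si sj : ℕ) (ci : Color) (mi : ℕ)
    (hij : i ≠ j) (hs : si ≠ sj)
    (d : ℕ) (hd : bwCompletesDoorway e i si ci mi d)
    (a : ℕ) (ha : bwEntersDoorway e j sj a) (hda : d < a)
    (c2 : ℕ) (hc2 : bwEntersCS e j c2) (hac : a < c2)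
    (hact : bwActiveThrough e j a c2) :
    ∃ c1, c1 ≤ c2 ∧ bwEntersCS e i c1 ∧ d < c1 ∧ bwActiveThrough e i d c1 := by
  by_contra hcon
  have hwait : ∀ n, d < n → n ≤ c2 + 1 → ((e.state n).pc i).Waiting si ci mi := by
    intro n
    induction n using Nat.strong_induction_on with
    | _ n ih =>
      intro hdn hn
      obtain rfl | hdn' : n = d + 1 ∨ d + 1 < n := by omega
      · exact ⟨0, .inl hd.2⟩
      obtain ⟨n, rfl⟩ : ∃ k, n = k + 1 := ⟨n - 1, by omega⟩
      refine ((ih n (by omega) (by omega) (by omega)).step (e.step n)).resolve_right fun hcs => ?_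
      refine hcon ⟨n, by omega, hcs, by omega, fun k hk hkn => ?_⟩
      obtain ⟨q, hq⟩ := ih k (by omega) hk (by omega)
      intro hr
      simp [hr] at hq
  have hbehind : ∀ n, a < n → n ≤ c2 + 1 →
      ((e.state n).pc j).Behind i ci mi (e.state n).gcolor sj := by
    intro n han
    induction n, han using Nat.le_induction with
    | base => intro _; rw [ha.2]; rfl
    | succ n han ih =>
      intro hn
      exact (ih (by omega)).step (BWInv.exec e n) (e.step n) hs
        (hwait n (by omega) (by omega))
  obtain ⟨s, c, m, hcs⟩ := hc2.2
  have := hbehind (c2 + 1) (by omega) le_rfl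
  rw [hcs] at this
  exact this
end
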